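/- arXiv:2105.02496 — 6 statements merged into one kernel-verified Lean document; each statement's English description precedes it below -/
import Mathlib

section
/- Let G be a prolific graph. Then there exists r with 1 ≤ r ≤ 3 such that χ'(L^r(G)) > χ'(G), where the chromatic index is χ'(H) = χ(L(H)), the chromatic number of the line graph of H. -/
open SimpleGraph

/-- A bundled simple graph: a vertex type together with a simple graph on it. -/
structure FGraph where
  V : Type
  G : SimpleGraph V

/-- The line graph of a bundled graph: the vertices are the edges of `G`, two distinct
edges being adjacent iff they share an endpoint. -/
def FGraph.line (X : FGraph) : FGraph := ⟨X.G.edgeSet, X.G.lineGraph⟩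

/-- The `k`-fold iterated line graph `L^k(G)`. -/
def FGraph.iter (X : FGraph) (k : ℕ) : FGraph := FGraph.line^[k] X

/-- The number of vertices `n(G)`. -/
noncomputable def FGraph.n (X : FGraph) : ℕ := Nat.card X.V

/-- The number of edges `e(G)`. -/
noncomputable def FGraph.e (X : FGraph) : ℕ := Nat.card X.G.edgeSet

/-- The degree of a vertex. -/
noncomputable def FGraph.deg (X : FGraph) (v : X.V) : ℕ := Nat.card (X.G.neighborSet v)

/-- The maximum degree `Δ(G)`. -/
noncomputable def FGraph.maxDeg (X : FGraph) : ℕ := sSup (Set.range X.deg)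

/-- The minimum degree `δ(G)`. -/
noncomputable def FGraph.minDeg (X : FGraph) : ℕ := sInf (Set.range X.deg)

/-- The average degree `d(G) = 2e(G)/n(G)`, as a rational number. -/
noncomputable def FGraph.avgDeg (X : FGraph) : ℚ := 2 * (X.e : ℚ) / (X.n : ℚ)

/-- A graph is prolific if it is connected and isomorphic to no path graph `P_k`,
to no cycle graph `C_k`, and not to the star `K_{1,3}`. -/
def FGraph.Prolific (X : FGraph) : Prop :=
  X.G.Connected ∧
  (∀ k : ℕ, IsEmpty (X.G ≃g pathGraph k)) ∧
  (∀ k : ℕ, IsEmpty (X.G ≃g cycleGraph k)) ∧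
  IsEmpty (X.G ≃g completeBipartiteGraph (Fin 1) (Fin 3))

/-- The chromatic index `χ'(G) = χ(L(G))`. -/
noncomputable def FGraph.chromIndex (X : FGraph) : ℕ∞ := X.G.lineGraph.chromaticNumber


section helpers

variable {V : Type}

noncomputable def dg (G : SimpleGraph V) (v : V) : ℕ := (G.neighborSet v).ncard

lemma closed_univ {G : SimpleGraph V} (hc : G.Connected) (S : Set V) (x : V) (hx : x ∈ S)
    (hS : ∀ a b, a ∈ S → G.Adj a b → b ∈ S) (y : V) : y ∈ S := by
  obtain ⟨w⟩ := hc.preconnected x y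
  induction w with
  | nil => exact hx
  | cons h p ih => exact ih (hS _ _ hx h)

lemma greedy [Finite V] (G : SimpleGraph V) (S : Set V) (k : ℕ) (hk : 0 < k)
    (hS : ∀ a b, a ∈ S → b ∈ S → ¬ G.Adj a b) (hd : ∀ v, v ∉ S → dg G v < k) :
    G.Colorable k := by
  classical
  have key : ∀ T : Finset V, ∃ c : V → Fin k, ∀ a b, (a ∈ S ∨ a ∈ T) → (b ∈ S ∨ b ∈ T) →
      G.Adj a b → c a ≠ c b := by
    intro T
    induction T using Finset.induction_on with
    | empty =>
      refine ⟨fun _ => ⟨0, hk⟩, fun a b ha hb hab => ?_⟩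
      simp at ha hb
      exact absurd hab (hS a b ha hb)
    | insert v T hv ih =>
      obtain ⟨c, hc⟩ := ih
      by_cases hvS : v ∈ S
      · refine ⟨c, fun a b ha hb hab => hc a b ?_ ?_ hab⟩
        · rcases ha with h | h
          · exact Or.inl h
          · rcases Finset.mem_insert.1 h with rfl | h
            · exact Or.inl hvS
            · exact Or.inr h
        · rcases hb with h | h
          · exact Or.inl h
          · rcases Finset.mem_insert.1 h with rfl | h
            · exact Or.inl hvS
            · exact Or.inr h
      · have h1 : (c '' G.neighborSet v).ncard < k :=
          lt_of_le_of_lt (Set.ncard_image_le (Set.toFinite _)) (hd v hvS)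
        obtain ⟨i, hi⟩ : ∃ i, i ∉ c '' G.neighborSet v := by
          by_contra! h
          have : c '' G.neighborSet v = Set.univ := Set.eq_univ_of_forall h
          rw [this, Set.ncard_univ, Nat.card_eq_fintype_card, Fintype.card_fin] at h1
          omega
        refine ⟨Function.update c v i, fun a b ha hb hab => ?_⟩
        by_cases hav : a = v
        · subst hav
          have hba : b ≠ a := hab.ne'
          rw [Function.update_self, Function.update_of_ne hba]
          intro h
          exact hi ⟨b, hab, h.symm⟩
        · by_cases hbv : b = v
          · subst hbv
            rw [Function.update_self, Function.update_of_ne hav]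
            intro h
            exact hi ⟨a, hab.symm, h⟩
          · rw [Function.update_of_ne hav, Function.update_of_ne hbv]
            refine hc a b ?_ ?_ hab
            · simpa [hav] using ha
            · simpa [hbv] using hb
  have := Fintype.ofFinite V
  obtain ⟨c, hc⟩ := key Finset.univ
  exact ⟨Coloring.mk c fun {a b} hab => hc a b (by simp) (by simp) hab⟩

lemma le_chrom [Finite V] (G : SimpleGraph V) (v : V) :
    (dg G v : ℕ∞) ≤ G.lineGraph.chromaticNumber := by
  have := le_chromaticNumber_of_pairwise_adj (G := G.lineGraph) (n := (dg G v : ℕ))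
    (ι := G.neighborSet v) (by rw [Nat.card_coe_set_eq]; exact le_rfl)
    (fun x => ⟨s(v, x.1), x.2⟩)
    (by
      intro x y hxy
      rw [lineGraph_adj_iff_exists]
      refine ⟨?_, v, by simp, by simp⟩
      intro h
      apply hxy
      have := congrArg Subtype.val h
      exact Subtype.ext (Sym2.congr_right.1 this))
  exact this

lemma dg_line [Finite V] (G : SimpleGraph V) (u v : V) (h : G.Adj u v) :
    dg G.lineGraph ⟨s(u, v), h⟩ + 2 = dg G u + dg G v := by
  have e : Subtype.val '' (G.lineGraph.neighborSet ⟨s(u, v), h⟩) =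
      (fun x => s(u, x)) '' (G.neighborSet u \ {v}) ∪
      (fun x => s(v, x)) '' (G.neighborSet v \ {u}) := by
    ext z
    simp only [Set.mem_image, Set.mem_union, mem_neighborSet, lineGraph_adj_iff_exists, Set.mem_sdiff,
      Set.mem_singleton_iff]
    constructor
    · rintro ⟨⟨z, hz⟩, ⟨h1, w, h2, h3⟩, rfl⟩
      simp only [Sym2.mem_iff] at h2
      obtain ⟨y, rfl⟩ := Sym2.mem_iff_exists.1 h3
      rcases h2 with rfl | rfl
      · left
        exact ⟨y, ⟨hz, fun hh => h1 (by subst hh; rfl)⟩, rfl⟩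
      · right
        exact ⟨y, ⟨hz, fun hh => h1 (by subst hh; exact Subtype.ext Sym2.eq_swap)⟩, rfl⟩
    · rintro (⟨x, ⟨hx, hxv⟩, rfl⟩ | ⟨x, ⟨hx, hxv⟩, rfl⟩)
      · refine ⟨⟨s(u, x), hx⟩, ⟨?_, u, by simp, by simp⟩, rfl⟩
        intro hh
        have := congrArg Subtype.val hh
        exact hxv (Sym2.congr_right.1 this).symm
      · refine ⟨⟨s(v, x), hx⟩, ⟨?_, v, by simp, by simp⟩, rfl⟩
        intro hh
        have := congrArg Subtype.val hh
        simp at this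
        grind
  have hu : (G.neighborSet u \ {v}).ncard + 1 = dg G u :=
    Set.ncard_sdiff_singleton_add_one h (Set.toFinite _)
  have hv : (G.neighborSet v \ {u}).ncard + 1 = dg G v :=
    Set.ncard_sdiff_singleton_add_one h.symm (Set.toFinite _)
  have hne := h.ne
  have := congrArg Set.ncard e
  rw [Set.ncard_image_of_injective _ Subtype.val_injective, Set.ncard_union_eq ?_ (Set.toFinite _)
    (Set.toFinite _), Set.ncard_image_of_injective, Set.ncard_image_of_injective] at this
  · unfold dg at *
    omega
  · intro x y hxy; exact Sym2.congr_right.1 hxy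
  · intro x y hxy; exact Sym2.congr_right.1 hxy
  · rw [Set.disjoint_left]
    rintro _ ⟨x, ⟨hx, hxv⟩, rfl⟩ ⟨y, ⟨hy, hyv⟩, hh⟩
    simp at hh hxv hyv
    grind

/-- degree lower bound in the triple line graph -/
lemma chrom3 [Finite V] (H : SimpleGraph V) (e f g : V) (hf : H.Adj e f) (hg : H.Adj e g)
    (hfg : f ≠ g) (m : ℕ) (hm : m + 6 ≤ 2 * dg H e + dg H f + dg H g) :
    (m : ℕ∞) ≤ H.lineGraph.lineGraph.lineGraph.chromaticNumber := by
  have h1 := dg_line H e f hf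
  have h2 := dg_line H e g hg
  have hadj : H.lineGraph.Adj ⟨s(e, f), hf⟩ ⟨s(e, g), hg⟩ := by
    rw [lineGraph_adj_iff_exists]
    refine ⟨?_, e, by simp, by simp⟩
    intro hh
    have := congrArg Subtype.val hh
    exact hfg (Sym2.congr_right.1 this)
  have h3 := dg_line H.lineGraph _ _ hadj
  refine le_trans ?_ (le_chrom H.lineGraph.lineGraph ⟨s(_, _), hadj⟩)
  exact_mod_cast (by omega)

end helpers

section classif

variable {V : Type}

def IsP (G : SimpleGraph V) (k : ℕ) (f : ℕ → V) : Prop :=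
  (∀ i j, i < k → j < k → f i = f j → i = j) ∧ ∀ i, i + 1 < k → G.Adj (f i) (f (i + 1))

lemma IsP.le_card [Finite V] {G : SimpleGraph V} {k : ℕ} {f : ℕ → V} (h : IsP G k f) :
    k ≤ Nat.card V := by
  have := Nat.card_le_card_of_injective (fun i : Fin k => f i)
    (fun i j hij => Fin.ext (h.1 i j i.2 j.2 hij))
  simpa using this

lemma path_or_cycle [Finite V] (G : SimpleGraph V) (hc : G.Connected)
    (hd : ∀ x a b c, G.Adj x a → G.Adj x b → G.Adj x c → a = b ∨ a = c ∨ b = c) :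
    (∃ k, Nonempty (G ≃g pathGraph k)) ∨ (∃ k, Nonempty (G ≃g cycleGraph k)) := by
  classical
  obtain ⟨v0⟩ := hc.nonempty
  have hex : ∃ k f, 1 ≤ k ∧ IsP G k f ∧ ∀ k' f', IsP G k' f' → k' ≤ k := by
    let P : ℕ → Prop := fun k => ∃ f, IsP G k f
    have h1 : P 1 := ⟨fun _ => v0, fun i j hi hj _ => by omega, fun i hi => by omega⟩
    have hb : ∀ k, P k → k ≤ Nat.card V := fun k ⟨f, hf⟩ => hf.le_card
    have hs : P (Nat.findGreatest P (Nat.card V)) := Nat.findGreatest_spec (hb 1 h1) h1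
    obtain ⟨f, hf⟩ := hs
    exact ⟨_, f, Nat.le_findGreatest (hb 1 h1) h1, hf,
      fun k' f' h' => Nat.le_findGreatest (hb k' ⟨f', h'⟩) ⟨f', h'⟩⟩
  obtain ⟨k, f, hk, ⟨hinj, hadj⟩, hmax⟩ := hex
  -- right end
  have hR : ∀ w, G.Adj (f (k - 1)) w → ∃ j, j < k ∧ f j = w := by
    intro w hw
    by_contra! hn
    have := hmax (k + 1) (Function.update f k w) ⟨?_, ?_⟩
    · omega
    · intro i j hi hj hij
      by_cases hi' : i = k <;> by_cases hj' : j = k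
      · omega
      · subst hi'
        rw [Function.update_self, Function.update_of_ne hj'] at hij
        exact absurd hij.symm (hn j (by omega))
      · subst hj'
        rw [Function.update_self, Function.update_of_ne hi'] at hij
        exact absurd hij (hn i (by omega))
      · rw [Function.update_of_ne hj', Function.update_of_ne hi'] at hij
        exact hinj i j (by omega) (by omega) hij
    · intro i hi
      rw [Function.update_of_ne (by omega : i ≠ k)]
      by_cases hik : i + 1 = k
      · rw [hik, Function.update_self]
        have : i = k - 1 := by omega
        rw [this]; exact hw
      · rw [Function.update_of_ne hik]
        exact hadj i (by omega)
  have hL : ∀ w, G.Adj (f 0) w → ∃ j, j < k ∧ f j = w := by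
    intro w hw
    by_contra! hn
    have := hmax (k + 1) (fun i => if i = 0 then w else f (i - 1)) ⟨?_, ?_⟩
    · omega
    · intro i j hi hj hij
      by_cases hi' : i = 0 <;> by_cases hj' : j = 0
      · omega
      · simp only [hi', hj', if_true, if_false] at hij
        exact absurd hij.symm (hn (j - 1) (by omega))
      · simp only [hi', hj', if_true, if_false] at hij
        exact absurd hij (hn (i - 1) (by omega))
      · simp only [hi', hj', if_false] at hij
        have := hinj (i - 1) (j - 1) (by omega) (by omega) hij
        omega
    · intro i hi
      by_cases hi' : i = 0
      · subst hi'
        simpa using hw.symm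
      · simp only [hi', if_false, Nat.add_sub_cancel, Nat.succ_ne_zero]
        have := hadj (i - 1) (by omega)
        rwa [show i - 1 + 1 = i by omega] at this
  have hM : ∀ i w, 0 < i → i + 1 < k → G.Adj (f i) w → w = f (i - 1) ∨ w = f (i + 1) := by
    intro i w hi hik hw
    have h1 := hadj (i - 1) (by omega)
    rw [show i - 1 + 1 = i by omega] at h1
    rcases hd (f i) w (f (i - 1)) (f (i + 1)) hw h1.symm (hadj i hik) with h | h | h
    · exact Or.inl h
    · exact Or.inr h
    · have := hinj _ _ (by omega) (by omega) h
      omega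
  have hsurj : ∀ y, ∃ j, j < k ∧ f j = y := by
    intro y
    refine closed_univ hc {y | ∃ j, j < k ∧ f j = y} (f 0) ⟨0, hk, rfl⟩ ?_ y
    rintro _ b ⟨i, hi, rfl⟩ hb
    by_cases h0 : i = 0
    · subst h0; exact hL b hb
    by_cases h1 : i = k - 1
    · subst h1; exact hR b hb
    rcases hM i b (by omega) (by omega) hb with rfl | rfl
    · exact ⟨i - 1, by omega, rfl⟩
    · exact ⟨i + 1, by omega, rfl⟩
  -- adjacency for i < j
  have hA : ∀ i j, i < j → j < k → G.Adj (f i) (f j) → j = i + 1 ∨ (i = 0 ∧ j = k - 1) := by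
    intro i j hij hj h
    by_cases h0 : i = 0
    · by_cases h1 : j = k - 1
      · exact Or.inr ⟨h0, h1⟩
      · rcases hM j (f i) (by omega) (by omega) h.symm with h | h
        · have := hinj _ _ (by omega) (by omega) h
          omega
        · have := hinj _ _ (by omega) (by omega) h
          omega
    · rcases hM i (f j) (by omega) (by omega) h with h | h
      · have := hinj _ _ (by omega) (by omega) h
        omega
      · have := hinj _ _ (by omega) (by omega) h
        omega
  let F : Fin k → V := fun i => f i
  have hF : Function.Bijective F :=
    ⟨fun i j hij => Fin.ext (hinj i j i.2 j.2 hij), fun y => by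
      obtain ⟨j, hj, h⟩ := hsurj y
      exact ⟨⟨j, hj⟩, h⟩⟩
  by_cases hcyc : 3 ≤ k ∧ G.Adj (f 0) (f (k - 1))
  · right
    refine ⟨k, ⟨RelIso.symm ⟨Equiv.ofBijective F hF, ?_⟩⟩⟩
    intro a b
    have key : ∀ a b : Fin k, a.1 < b.1 → (G.Adj (f a) (f b) ↔ (cycleGraph k).Adj a b) := by
      intro a b hab
      have h1 : (b - a).val = b.1 - a.1 := Fin.coe_sub_iff_le.mpr (le_of_lt hab)
      have h2 : (a - b).val = k + a.1 - b.1 := Fin.coe_sub_iff_lt.mpr hab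
      rw [cycleGraph_adj', h1, h2]
      have ha := a.2
      have hb := b.2
      constructor
      · intro h
        have := hA a b hab b.2 h
        omega
      · rintro (h | h)
        · have e1 : a.1 = 0 := by omega
          have e2 : b.1 = k - 1 := by omega
          rw [e1, e2]; exact hcyc.2
        · have e1 : b.1 = a.1 + 1 := by omega
          rw [e1]; exact hadj a.1 (by omega)
    show G.Adj (f a) (f b) ↔ _
    rcases lt_trichotomy a.1 b.1 with h | h | h
    · exact key a b h
    · have : a = b := Fin.ext h
      subst this; simp
    · rw [G.adj_comm, (cycleGraph k).adj_comm]; exact key b a h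
  · left
    refine ⟨k, ⟨RelIso.symm ⟨Equiv.ofBijective F hF, ?_⟩⟩⟩
    intro a b
    have key : ∀ a b : Fin k, a.1 < b.1 → (G.Adj (f a) (f b) ↔ (pathGraph k).Adj a b) := by
      intro a b hab
      rw [pathGraph_adj]
      have ha := a.2
      have hb := b.2
      constructor
      · intro h
        rcases hA a b hab b.2 h with h' | ⟨h', h''⟩
        · omega
        · rw [h', h''] at h
          have : ¬ 3 ≤ k := fun h3 => hcyc ⟨h3, h⟩
          omega
      · rintro (h | h)
        · rw [← h]; exact hadj a.1 (by omega)
        · omega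
    show G.Adj (f a) (f b) ↔ _
    rcases lt_trichotomy a.1 b.1 with h | h | h
    · exact key a b h
    · have : a = b := Fin.ext h
      subst this; simp
    · rw [G.adj_comm, (pathGraph k).adj_comm]; exact key b a h

lemma star_iso (G : SimpleGraph V) (hc : G.Connected) (u a b c : V) (hab : a ≠ b)
    (hac : a ≠ c) (hbc : b ≠ c) (ha : G.Adj u a) (hb : G.Adj u b) (hcc : G.Adj u c)
    (hu : ∀ x, G.Adj u x → x = a ∨ x = b ∨ x = c)
    (hl : ∀ x y, G.Adj u x → G.Adj x y → y = u) :
    Nonempty (G ≃g completeBipartiteGraph (Fin 1) (Fin 3)) := by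
  have hS : ∀ y, y = u ∨ G.Adj u y := by
    intro y
    refine closed_univ hc {y | y = u ∨ G.Adj u y} u (Or.inl rfl) ?_ y
    rintro x y (rfl | hx) hxy
    · exact Or.inr hxy
    · exact Or.inl (hl x y hx hxy)
  let N : Fin 3 → V := ![a, b, c]
  have hN : ∀ i, G.Adj u (N i) := by
    intro i; fin_cases i <;> simp [N, ha, hb, hcc]
  have hNi : Function.Injective N := by
    intro i j hij
    fin_cases i <;> fin_cases j <;> simp [N] at hij ⊢ <;> grind
  let F : Fin 1 ⊕ Fin 3 → V := Sum.elim (fun _ => u) N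
  have hF : Function.Bijective F := by
    constructor
    · rintro (i | i) (j | j) hij
      · congr 1; exact Subsingleton.elim _ _
      · exact absurd hij (hN j).ne
      · exact absurd hij (hN i).ne'
      · exact congrArg Sum.inr (hNi hij)
    · intro y
      rcases hS y with rfl | h
      · exact ⟨Sum.inl 0, rfl⟩
      · rcases hu y h with rfl | rfl | rfl
        · exact ⟨Sum.inr 0, rfl⟩
        · exact ⟨Sum.inr 1, rfl⟩
        · exact ⟨Sum.inr 2, rfl⟩
  refine ⟨RelIso.symm ⟨Equiv.ofBijective F hF, ?_⟩⟩
  rintro (i | i) (j | j)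
  · simp [F]
  · simpa [F] using hN j
  · simpa [F] using (hN i).symm
  · simp only [Equiv.ofBijective_apply, F, Sum.elim_inr, completeBipartiteGraph_adj]
    simp only [Sum.isLeft_inr, Sum.isRight_inr]
    constructor
    · intro h
      exact absurd (hl _ _ (hN i) h) (hN j).ne'
    · simp

end classif

section main

variable {V : Type}

lemma two_nbrs [Finite V] (G : SimpleGraph V) (u v : V) (h : G.Adj u v) (hu : 3 ≤ dg G u) :
    ∃ f g : G.edgeSet, f ≠ g ∧ G.lineGraph.Adj ⟨s(u, v), h⟩ f ∧ G.lineGraph.Adj ⟨s(u, v), h⟩ g ∧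
      dg G u ≤ dg G.lineGraph f + 1 ∧ dg G u ≤ dg G.lineGraph g + 1 := by
  have hu' : (G.neighborSet u \ {v}).ncard + 1 = dg G u :=
    Set.ncard_sdiff_singleton_add_one h (Set.toFinite _)
  have h2 : 1 < (G.neighborSet u \ {v}).ncard := by omega
  obtain ⟨x, y, ⟨hx, hxv⟩, ⟨hy, hyv⟩, hxy⟩ := (Set.one_lt_ncard_iff (Set.toFinite _)).1 h2
  have hpos : ∀ z, G.Adj u z → 1 ≤ dg G z := by
    intro z hz
    exact (Set.ncard_pos (Set.toFinite _)).2 ⟨u, hz.symm⟩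
  have hadj : ∀ z (hz : G.Adj u z), z ≠ v → G.lineGraph.Adj ⟨s(u, v), h⟩ ⟨s(u, z), hz⟩ := by
    intro z hz hzv
    rw [lineGraph_adj_iff_exists]
    refine ⟨?_, u, by simp, by simp⟩
    intro hh
    have := congrArg Subtype.val hh
    simp only [Sym2.congr_right] at this
    exact hzv this.symm
  refine ⟨⟨s(u, x), hx⟩, ⟨s(u, y), hy⟩, ?_, hadj x hx hxv, hadj y hy hyv, ?_, ?_⟩
  · intro hh
    have := congrArg Subtype.val hh
    simp only [Sym2.congr_right] at this
    exact hxy this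
  · have := dg_line G u x hx
    have := hpos x hx
    omega
  · have := dg_line G u y hy
    have := hpos y hy
    omega

lemma exists_three [Finite V] (G : SimpleGraph V) (hc : G.Connected)
    (hP : ∀ k : ℕ, IsEmpty (G ≃g pathGraph k))
    (hC : ∀ k : ℕ, IsEmpty (G ≃g cycleGraph k))
    (hK : IsEmpty (G ≃g completeBipartiteGraph (Fin 1) (Fin 3))) :
    ∃ e, 3 ≤ dg G.lineGraph e := by
  by_contra! hn
  have hs : ∀ u v, G.Adj u v → dg G u + dg G v ≤ 4 := by
    intro u v h
    have := dg_line G u v h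
    have := hn ⟨s(u, v), h⟩
    omega
  by_cases h3 : ∃ u, 3 ≤ dg G u
  · obtain ⟨u, hu⟩ := h3
    obtain ⟨a, b, c, ha, hb, hcc, hab, hac, hbc⟩ :=
      (Set.two_lt_ncard_iff (Set.toFinite _)).1 (show 2 < (G.neighborSet u).ncard from hu)
    have hpos : ∀ z, G.Adj u z → 1 ≤ dg G z := by
      intro z hz
      exact (Set.ncard_pos (Set.toFinite _)).2 ⟨u, hz.symm⟩
    have hle : dg G u ≤ 3 := by
      have := hpos a ha
      have := hs u a ha
      omega
    have heq : ({a, b, c} : Set V) = G.neighborSet u := by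
      apply Set.eq_of_subset_of_ncard_le _ _ (Set.toFinite _)
      · rintro x (rfl | rfl | rfl) <;> assumption
      · rw [Set.ncard_eq_three.2 ⟨a, b, c, hab, hac, hbc, rfl⟩]; exact hle
    obtain ⟨i⟩ := star_iso G hc u a b c hab hac hbc ha hb hcc
      (fun x hx => by
        have : x ∈ ({a, b, c} : Set V) := heq ▸ hx
        simpa using this)
      (fun x y hx hxy => by
        have h1 : dg G x ≤ 1 := by
          have := hs u x hx
          omega
        exact (Set.ncard_le_one (Set.toFinite _)).1 h1 y hxy u hx.symm)
    exact hK.false i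
  · push Not at h3
    rcases path_or_cycle G hc (by
      intro x a b c ha hb hcc
      by_contra! hne
      have : 2 < (G.neighborSet x).ncard :=
        (Set.two_lt_ncard_iff (Set.toFinite _)).2 ⟨a, b, c, ha, hb, hcc, hne.1, hne.2.1, hne.2.2⟩
      have h4 := h3 x
      unfold dg at h4
      omega) with ⟨k, ⟨i⟩⟩ | ⟨k, ⟨i⟩⟩
    · exact (hP k).false i
    · exact (hC k).false i

lemma main_lt [Finite V] (G : SimpleGraph V) (h3 : ∃ e, 3 ≤ dg G.lineGraph e) :
    G.lineGraph.chromaticNumber < G.lineGraph.lineGraph.lineGraph.lineGraph.chromaticNumber := by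
  have fin : ∀ m : ℕ, G.lineGraph.Colorable m →
      ((m + 1 : ℕ) : ℕ∞) ≤ G.lineGraph.lineGraph.lineGraph.lineGraph.chromaticNumber →
      G.lineGraph.chromaticNumber < G.lineGraph.lineGraph.lineGraph.lineGraph.chromaticNumber := by
    intro m h1 h2
    refine lt_of_le_of_lt h1.chromaticNumber_le (lt_of_lt_of_le ?_ h2)
    exact_mod_cast Nat.lt_succ_self m
  obtain ⟨e0, he0⟩ := h3
  have : Nonempty G.edgeSet := ⟨e0⟩
  obtain ⟨e, he⟩ := Finite.exists_max (dg G.lineGraph)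
  obtain ⟨D, hD⟩ : ∃ D, D = dg G.lineGraph e := ⟨_, rfl⟩
  rw [← hD] at he
  have hD3 : 3 ≤ D := he0.trans (he e0)
  have hcol : G.lineGraph.Colorable (D + 1) :=
    greedy _ ∅ (D + 1) (by omega) (by simp) (fun v _ => Nat.lt_succ_of_le (he v))
  by_cases hA : ∃ u v, ∃ h : G.Adj u v, dg G.lineGraph ⟨s(u, v), h⟩ = D ∧
      12 ≤ 3 * dg G u + dg G v ∧ 3 ≤ dg G u
  · obtain ⟨u, v, h, h1, h2, hu⟩ := hA
    have := dg_line G u v h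
    obtain ⟨f, g, hfg, hf, hg, hf', hg'⟩ := two_nbrs G u v h hu
    exact fin _ hcol (chrom3 G.lineGraph _ f g hf hg hfg _ (by omega))
  push Not at hA
  have hB : ∀ u v, ∀ h : G.Adj u v, dg G.lineGraph ⟨s(u, v), h⟩ = D →
      D = 3 ∧ (dg G u = 3 ∨ dg G v = 3) := by
    intro u v h h1
    have e1 := dg_line G u v h
    have h1' : dg G.lineGraph ⟨s(v, u), h.symm⟩ = D := by
      rw [← h1]; congr 1; exact Subtype.ext Sym2.eq_swap
    have a1 := hA u v h h1
    have a2 := hA v u h.symm h1'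
    by_contra hcon
    by_cases 3 * dg G u + dg G v < 12 <;> by_cases 3 * dg G v + dg G u < 12 <;> omega
  have hB' : ∀ x, dg G.lineGraph x = D → D = 3 ∧ ∃ f g : G.edgeSet, f ≠ g ∧
      G.lineGraph.Adj x f ∧ G.lineGraph.Adj x g ∧
      2 ≤ dg G.lineGraph f ∧ 2 ≤ dg G.lineGraph g := by
    rintro ⟨x, hx⟩ h
    induction x using Sym2.ind with
    | _ u v =>
    obtain ⟨hD', hh⟩ := hB u v hx h
    refine ⟨hD', ?_⟩
    rcases hh with hh | hh
    · obtain ⟨f, g, hfg, hf, hg, hf', hg'⟩ := two_nbrs G u v hx (by omega)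
      exact ⟨f, g, hfg, hf, hg, by omega, by omega⟩
    · obtain ⟨f, g, hfg, hf, hg, hf', hg'⟩ := two_nbrs G v u ((show G.Adj u v from hx).symm) (by omega)
      have e1 : (⟨s(v, u), (show G.Adj u v from hx).symm⟩ : G.edgeSet) = ⟨s(u, v), hx⟩ := Subtype.ext Sym2.eq_swap
      rw [e1] at hf hg
      exact ⟨f, g, hfg, hf, hg, by omega, by omega⟩
  have hD' : D = 3 := (hB' e hD.symm).1
  by_cases hS : ∃ x y, dg G.lineGraph x = D ∧ dg G.lineGraph y = D ∧ G.lineGraph.Adj x y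
  · obtain ⟨x, y, hx, hy, hxy⟩ := hS
    obtain ⟨-, f, g, hfg, hf, hg, hf', hg'⟩ := hB' x hx
    obtain ⟨z, hz, hxz, hzd⟩ : ∃ z, y ≠ z ∧ G.lineGraph.Adj x z ∧ 2 ≤ dg G.lineGraph z := by
      by_cases hyf : y = f
      · exact ⟨g, hyf ▸ hfg, hg, hg'⟩
      · exact ⟨f, hyf, hf, hf'⟩
    exact fin _ hcol (chrom3 G.lineGraph x y z hxy hxz hz _ (by omega))
  · push Not at hS
    have hcol3 : G.lineGraph.Colorable 3 :=
      greedy _ {x | dg G.lineGraph x = D} 3 (by omega) (fun a b ha hb => hS a b ha hb)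
        (fun v hv => by
          have h1 := he v
          have h2 : dg G.lineGraph v ≠ D := hv
          omega)
    obtain ⟨-, f, g, hfg, hf, hg, hf', hg'⟩ := hB' e hD.symm
    exact fin _ hcol3 (chrom3 G.lineGraph e f g hf hg hfg _ (by omega))

end main

/-- For a prolific graph there is `r` with `1 ≤ r ≤ 3` and `χ'(L^r(G)) > χ'(G)`,
where `χ'(H) = χ(L(H))`. -/
theorem chromaticIndex_index_le_three (X : FGraph) [Finite X.V] (hp : X.Prolific) :
    ∃ r : ℕ, 1 ≤ r ∧ r ≤ 3 ∧ X.chromIndex < (X.iter r).chromIndex := by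
  obtain ⟨hc, hP, hC, hK⟩ := hp
  exact ⟨3, by norm_num, le_rfl, main_lt X.G (exists_three X.G hc hP hC hK)⟩
end

section
/- Let G be a prolific graph. Then there exists r with 1 ≤ r ≤ 3 such that ω(L^r(G)) > ω(G), where ω denotes the clique number. -/
open SimpleGraph

namespace CliqueIdx

lemma finite_edgeSet {V : Type} [Finite V] (G : SimpleGraph V) : Finite G.edgeSet :=
  Subtype.finite

lemma deg_le_cliqueNum {V : Type} [Finite V] (G : SimpleGraph V) (v : V) :
    (G.neighborSet v).ncard ≤ G.lineGraph.cliqueNum := by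
  classical
  have := Fintype.ofFinite V
  have := finite_edgeSet G
  have : Fintype G.edgeSet := Fintype.ofFinite _
  let T : Finset G.edgeSet := Finset.univ.filter (fun e => v ∈ (e : Sym2 V))
  have hT : G.lineGraph.IsClique (T : Set G.edgeSet) := by
    intro e he e' he' hne
    rw [lineGraph_adj_iff_exists]
    refine ⟨hne, v, ?_, ?_⟩
    · simpa [T] using he
    · simpa [T] using he'
  refine le_trans ?_ (IsClique.card_le_cliqueNum (tc := hT))
  rw [← Set.ncard_coe_finset, ← Set.ncard_image_of_injective (T : Set G.edgeSet) Subtype.val_injective]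
  refine Set.ncard_le_ncard_of_injOn (fun w => s(v, w)) ?_ ?_ (Set.toFinite _)
  · intro w hw
    exact ⟨⟨s(v, w), hw⟩, by simp [T], rfl⟩
  · intro a _ b _ h
    exact Sym2.congr_right.1 h

lemma deg_line {V : Type} [Finite V] (G : SimpleGraph V) (u v : V) (h : G.Adj u v) :
    (G.neighborSet u).ncard + (G.neighborSet v).ncard ≤
      (G.lineGraph.neighborSet ⟨s(u, v), h⟩).ncard + 2 := by
  classical
  have := finite_edgeSet G
  have huv : u ≠ v := h.ne
  let A : Set (Sym2 V) := (fun w => s(u, w)) '' (G.neighborSet u \ {v})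
  let B : Set (Sym2 V) := (fun w => s(v, w)) '' (G.neighborSet v \ {u})
  have hA : A.ncard = (G.neighborSet u).ncard - 1 := by
    rw [Set.ncard_image_of_injective _ (fun a b h => Sym2.congr_right.1 h),
      Set.ncard_sdiff_singleton_of_mem ((G.mem_neighborSet _ _).2 h)]
  have hB : B.ncard = (G.neighborSet v).ncard - 1 := by
    rw [Set.ncard_image_of_injective _ (fun a b h => Sym2.congr_right.1 h),
      Set.ncard_sdiff_singleton_of_mem ((G.mem_neighborSet _ _).2 h.symm)]
  have hAB : Disjoint A B := by
    rw [Set.disjoint_left]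
    rintro _ ⟨x, ⟨hx, hxv⟩, rfl⟩ ⟨y, ⟨hy, hyu⟩, hxy⟩
    simp at hxy hxv hyu
    grind
  have hsub : A ∪ B ⊆ Subtype.val '' (G.lineGraph.neighborSet ⟨s(u, v), h⟩) := by
    rintro _ (⟨x, ⟨hx, hxv⟩, rfl⟩ | ⟨x, ⟨hx, hxv⟩, rfl⟩)
    · refine ⟨⟨s(u, x), hx⟩, ?_, rfl⟩
      rw [mem_neighborSet, lineGraph_adj_iff_exists]
      refine ⟨?_, u, by simp, by simp⟩
      simp at hxv ⊢
      grind
    · refine ⟨⟨s(v, x), hx⟩, ?_, rfl⟩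
      rw [mem_neighborSet, lineGraph_adj_iff_exists]
      refine ⟨?_, v, by simp, by simp⟩
      simp at hxv ⊢
      grind
  have := Set.ncard_le_ncard hsub (Set.toFinite _)
  rw [Set.ncard_image_of_injective _ Subtype.val_injective, Set.ncard_union_eq hAB (Set.toFinite _) (Set.toFinite _), hA, hB] at this
  omega

lemma deg_three {V : Type} [Finite V] (G : SimpleGraph V) {v a b c : V}
    (ha : G.Adj v a) (hb : G.Adj v b) (hc : G.Adj v c) (hab : a ≠ b) (hac : a ≠ c) (hbc : b ≠ c) :
    3 ≤ (G.neighborSet v).ncard := by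
  have : ({a, b, c} : Set V).ncard = 3 := Set.ncard_eq_three.2 ⟨a, b, c, hab, hac, hbc, rfl⟩
  rw [← this]
  refine Set.ncard_le_ncard ?_ (Set.toFinite _)
  rintro x (rfl | rfl | rfl) <;> assumption

lemma crossing {V : Type} {G : SimpleGraph V} (hc : G.Connected) (S : Set V) {x y : V}
    (hx : x ∈ S) (hy : y ∉ S) : ∃ a b, a ∈ S ∧ b ∉ S ∧ G.Adj a b := by
  obtain ⟨p⟩ := hc.preconnected x y
  obtain ⟨d, -, h1, h2⟩ := p.exists_boundary_dart S hx hy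
  exact ⟨d.fst, d.snd, h1, h2, d.adj⟩

def IsP {V : Type} (G : SimpleGraph V) (n : ℕ) (f : ℕ → V) : Prop :=
  (∀ i j, i < n → j < n → f i = f j → i = j) ∧ (∀ i, i + 1 < n → G.Adj (f i) (f (i + 1)))

lemma exists_deg_three {V : Type} [Finite V] (G : SimpleGraph V) (hc : G.Connected)
    (hp : ∀ k : ℕ, IsEmpty (G ≃g pathGraph k)) (hcy : ∀ k : ℕ, IsEmpty (G ≃g cycleGraph k)) :
    ∃ v, 3 ≤ (G.neighborSet v).ncard := by
  classical
  have := Fintype.ofFinite V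
  by_contra hno
  have no3 : ∀ v a b c, G.Adj v a → G.Adj v b → G.Adj v c → a ≠ b → a ≠ c → b ≠ c → False :=
    fun v a b c h1 h2 h3 h4 h5 h6 => hno ⟨v, deg_three G h1 h2 h3 h4 h5 h6⟩
  have hbd : ∀ n, (∃ f, IsP G n f) → n ≤ Fintype.card V := by
    rintro n ⟨f, hf, -⟩
    have := Fintype.card_le_of_injective (fun i : Fin n => f i)
      (fun i j h => Fin.ext (hf i j i.2 j.2 h))
    simpa using this
  obtain ⟨v0⟩ := hc.nonempty
  have h1 : ∃ f, IsP G 1 f := ⟨fun _ => v0, by intro i j; omega, by intro i; omega⟩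
  obtain ⟨n, hn1, ⟨f, hf⟩, hmax⟩ : ∃ n, 1 ≤ n ∧ (∃ f, IsP G n f) ∧ ¬ ∃ f, IsP G (n + 1) f := by
    by_contra hcon
    push Not at hcon
    have : ∀ n, ∃ f, IsP G (n + 1) f := by
      intro n
      induction n with
      | zero => exact h1
      | succ k ih => 
        obtain ⟨f, hf⟩ := ih
        exact hcon (k + 1) (by omega) ⟨f, hf⟩
    have := hbd _ (this (Fintype.card V))
    omega
  obtain ⟨hinj, hadj⟩ := hf
  have hadj' : ∀ i, 0 < i → i < n → G.Adj (f i) (f (i - 1)) := by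
    intro i h0 hi
    have := hadj (i - 1) (by omega)
    rw [Nat.sub_add_cancel h0] at this
    exact this.symm
  have hsurj : ∀ x, ∃ i, i < n ∧ f i = x := by
    by_contra hcon
    push Not at hcon
    obtain ⟨y, hy⟩ := hcon
    obtain ⟨a, b, ⟨i, hi, rfl⟩, hb, hab⟩ := crossing hc {x | ∃ i, i < n ∧ f i = x}
      (x := f 0) (y := y) ⟨0, by omega, rfl⟩ (by rintro ⟨i, hi, h⟩; exact hy i hi h)
    have hb' : ∀ j, j < n → f j ≠ b := fun j hj h => hb ⟨j, hj, h⟩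
    rcases Nat.eq_zero_or_pos i with rfl | h0
    · apply hmax
      refine ⟨fun j => if j = 0 then b else f (j - 1), ?_, ?_⟩
      · intro j k hj hk h
        dsimp only at h
        split_ifs at h with h1 h2 h2
        · omega
        · exact absurd h.symm (hb' _ (by omega))
        · exact absurd h (hb' _ (by omega))
        · have := hinj _ _ (by omega) (by omega) h
          omega
      · intro j hj
        rcases Nat.eq_zero_or_pos j with rfl | h0
        · simpa using hab.symm
        · have := hadj (j - 1) (by omega)
          rw [Nat.sub_add_cancel h0] at this
          simpa [h0.ne'] using this
    · by_cases hl : i + 1 < n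
      · refine no3 (f i) (f (i - 1)) (f (i + 1)) b (hadj' i h0 hi) (hadj i hl) hab ?_
          (hb' _ (by omega)) (hb' _ hl)
        intro h
        have := hinj _ _ (by omega) (by omega) h
        omega
      · apply hmax
        refine ⟨fun j => if j = n then b else f j, ?_, ?_⟩
        · intro j k hj hk h
          dsimp only at h
          split_ifs at h with h1 h2 h2
          · omega
          · exact absurd h.symm (hb' _ (by omega))
          · exact absurd h (hb' _ (by omega))
          · exact hinj _ _ (by omega) (by omega) h
        · intro j hj
          have hjn : j ≠ n := by omega
          by_cases h2 : j + 1 = n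
          · have : j = i := by omega
            subst this
            simpa [hjn, h2] using hab
          · simpa [hjn, h2] using hadj j (by omega)
  -- chords
  have chord : ∀ i j, i + 1 < j → j < n → G.Adj (f i) (f j) → i = 0 ∧ j + 1 = n := by
    intro i j hij hj h
    constructor
    · by_contra h0
      refine no3 (f i) (f (i - 1)) (f (i + 1)) (f j) (hadj' i (by omega) (by omega))
        (hadj i (by omega)) h ?_ ?_ ?_ <;>
      · intro h
        have := hinj _ _ (by omega) (by omega) h
        omega
    · by_contra h0
      refine no3 (f j) (f (j - 1)) (f (j + 1)) (f i) (hadj' j (by omega) (by omega))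
        (hadj j (by omega)) h.symm ?_ ?_ ?_ <;>
      · intro h
        have := hinj _ _ (by omega) (by omega) h
        omega
  let e : Fin n ≃ V := Equiv.ofBijective (fun i : Fin n => f i)
    ⟨fun i j h => Fin.ext (hinj i j i.2 j.2 h), fun x => by
      obtain ⟨i, hi, h⟩ := hsurj x
      exact ⟨⟨i, hi⟩, h⟩⟩
  have he : ∀ i, e i = f i := fun i => rfl
  by_cases hch : 3 ≤ n ∧ G.Adj (f 0) (f (n - 1))
  · obtain ⟨h3, hch⟩ := hch
    refine (hcy n).false (RelIso.symm ⟨e, ?_⟩)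
    intro i j
    rw [he, he, cycleGraph_adj']
    have sv : ∀ a b : Fin n, ((a - b : Fin n) : ℕ) =
        if (b : ℕ) ≤ a then (a : ℕ) - b else n + a - b := by
      intro a b
      split_ifs with hab
      · exact Fin.sub_val_of_le hab
      · exact Fin.coe_sub_iff_lt.2 (by simpa using hab)
    rw [sv, sv]
    have hi := i.2
    have hj := j.2
    constructor
    · intro h
      rcases lt_trichotomy (i : ℕ) j with hlt | heq | hlt
      · by_cases h1 : (i : ℕ) + 1 = j
        · split_ifs <;> omega
        · have := chord i j (by omega) j.2 h
          split_ifs <;> omega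
      · rw [heq] at h
        exact (G.irrefl h).elim
      · by_cases h1 : (j : ℕ) + 1 = i
        · split_ifs <;> omega
        · have := chord j i (by omega) i.2 h.symm
          split_ifs <;> omega
    · intro h
      have h' : (i : ℕ) + 1 = j ∨ (j : ℕ) + 1 = i ∨ ((i : ℕ) = 0 ∧ (j : ℕ) = n - 1) ∨
          ((j : ℕ) = 0 ∧ (i : ℕ) = n - 1) := by
        split_ifs at h <;> omega
      rcases h' with h | h | ⟨h, h'⟩ | ⟨h, h'⟩
      · rw [← h]; exact hadj _ (by omega)
      · rw [← h]; exact (hadj _ (by omega)).symm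
      · rw [h, h']; exact hch
      · rw [h, h']; exact hch.symm
  · refine (hp n).false (RelIso.symm ⟨e, ?_⟩)
    intro i j
    rw [he, he, pathGraph_adj]
    constructor
    · intro h
      rcases lt_trichotomy (i : ℕ) j with hlt | heq | hlt
      · by_contra hcon
        have := chord i j (by omega) j.2 h
        apply hch
        refine ⟨by omega, ?_⟩
        rw [show n - 1 = (j : ℕ) by omega, ← this.1]
        exact h
      · rw [heq] at h
        exact (G.irrefl h).elim
      · by_contra hcon
        have := chord j i (by omega) i.2 h.symm
        apply hch
        refine ⟨by omega, ?_⟩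
        rw [show n - 1 = (i : ℕ) by omega, ← this.1]
        exact h.symm
    · rintro (h | h)
      · rw [← h]; exact hadj _ (by omega)
      · rw [← h]; exact (hadj _ (by omega)).symm

end CliqueIdx

/-- For a prolific graph there is `r` with `1 ≤ r ≤ 3` and `ω(L^r(G)) > ω(G)`. -/
theorem cliqueNum_index_le_three (X : FGraph) [Finite X.V] (hp : X.Prolific) :
    ∃ r : ℕ, 1 ≤ r ∧ r ≤ 3 ∧ X.G.cliqueNum < (X.iter r).G.cliqueNum := by
  classical
  obtain ⟨V, G⟩ := X
  obtain ⟨hc, hpath, hcyc, -⟩ := hp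
  change Finite V at *
  dsimp only at hc hpath hcyc ⊢
  have := Fintype.ofFinite V
  obtain ⟨v, hv⟩ := CliqueIdx.exists_deg_three G hc hpath hcyc
  by_cases hw : G.cliqueNum ≤ 2
  · refine ⟨1, le_rfl, by norm_num, ?_⟩
    change _ < G.lineGraph.cliqueNum
    have := CliqueIdx.deg_le_cliqueNum G v
    omega
  · refine ⟨3, by norm_num, le_rfl, ?_⟩
    change _ < G.lineGraph.lineGraph.lineGraph.cliqueNum
    have := CliqueIdx.finite_edgeSet G
    have := CliqueIdx.finite_edgeSet G.lineGraph
    have := CliqueIdx.finite_edgeSet G.lineGraph.lineGraph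
    obtain ⟨s, hs⟩ := G.exists_isNClique_cliqueNum
    set w := G.cliqueNum with hwdef
    have hdeg : ∀ x ∈ s, w ≤ (G.neighborSet x).ncard + 1 := by
      intro x hx
      have h1 : ((s.erase x : Finset V) : Set V) ⊆ G.neighborSet x := by
        intro y hy
        simp at hy
        exact hs.isClique hx hy.1 (Ne.symm hy.2)
      have := Set.ncard_le_ncard h1 (Set.toFinite _)
      rw [Set.ncard_coe_finset, Finset.card_erase_of_mem hx, hs.card_eq] at this
      omega
    obtain ⟨a, ha, hda⟩ : ∃ a ∈ s, 3 ≤ (G.neighborSet a).ncard := by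
      by_cases hsu : ∃ y, y ∉ s
      · obtain ⟨y, hy⟩ := hsu
        obtain ⟨x, hx⟩ : s.Nonempty := by
          rw [← Finset.card_pos, hs.card_eq]; omega
        obtain ⟨a, b, ha, hb, hab⟩ := CliqueIdx.crossing hc (s : Set V) hx hy
        refine ⟨a, ha, ?_⟩
        have h1 : ((insert b (s.erase a) : Finset V) : Set V) ⊆ G.neighborSet a := by
          intro y hy
          simp at hy
          rcases hy with rfl | hy
          · exact hab
          · exact hs.isClique ha hy.1 (Ne.symm hy.2)
        have := Set.ncard_le_ncard h1 (Set.toFinite _)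
        rw [Set.ncard_coe_finset, Finset.card_insert_of_notMem
          (fun h => hb (Finset.mem_of_mem_erase h)), Finset.card_erase_of_mem ha, hs.card_eq] at this
        omega
      · push Not at hsu
        exact ⟨v, hsu v, hv⟩
    obtain ⟨b, hb, c, hcs, hbc⟩ : ∃ b ∈ s.erase a, ∃ c ∈ s.erase a, b ≠ c := by
      rw [← Finset.one_lt_card, Finset.card_erase_of_mem ha, hs.card_eq]; omega
    rw [Finset.mem_erase] at hb hcs
    have hab : G.Adj a b := hs.isClique ha hb.2 hb.1.symm
    have hac : G.Adj a c := hs.isClique ha hcs.2 hcs.1.symm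
    have d1 := CliqueIdx.deg_line G a b hab
    have d2 := CliqueIdx.deg_line G a c hac
    have hadj : G.lineGraph.Adj ⟨s(a, b), hab⟩ ⟨s(a, c), hac⟩ := by
      rw [lineGraph_adj_iff_exists]
      refine ⟨?_, a, by simp, by simp⟩
      intro h
      exact hbc (Sym2.congr_right.1 (congrArg Subtype.val h))
    have d3 := CliqueIdx.deg_line G.lineGraph _ _ hadj
    have d4 := CliqueIdx.deg_le_cliqueNum G.lineGraph.lineGraph ⟨s(_, _), hadj⟩
    have e1 := hdeg a ha
    have e2 := hdeg b hb.2
    have e3 := hdeg c hcs.2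
    omega
end

section
/- Let G be a prolific graph with minimum degree δ(G) ≥ 3. Then λ(L(G)) > λ(G), where λ denotes the edge connectivity. -/
open SimpleGraph

/-- The edge connectivity `λ(G)`: the minimum size of a set of edges whose deletion
disconnects the graph. -/
noncomputable def FGraph.edgeConn (X : FGraph) : ℕ :=
  sInf {k | ∃ F : Set (Sym2 X.V), F ⊆ X.G.edgeSet ∧ F.ncard = k ∧
    ¬ (X.G.deleteEdges F).Connected}

theorem ECL.closed {V : Type} {H : SimpleGraph V} (S : Set V)
    (hS : ∀ x y, H.Adj x y → x ∈ S → y ∈ S) {x y : V} (h : H.Reachable x y) (hx : x ∈ S) :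
    y ∈ S := by
  obtain ⟨w⟩ := h
  induction w with
  | nil => exact hx
  | cons hadj _ ih => exact ih (hS _ _ hadj hx)

/-- Edges at `v` in `A`. -/
def ECL.at {V : Type} (A : Set (Sym2 V)) (v : V) : Set (Sym2 V) := {g | g ∈ A ∧ v ∈ g}

theorem ECL.le_cut (X : FGraph) (F : Set (Sym2 X.V)) (hF : F ⊆ X.G.edgeSet)
    (h : ¬ (X.G.deleteEdges F).Connected) : X.edgeConn ≤ F.ncard :=
  Nat.sInf_le ⟨F, hF, rfl, h⟩

theorem ECL.deg_eq (X : FGraph) [Finite X.V] (v : X.V) :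
    X.deg v = (ECL.at X.G.edgeSet v).ncard := by
  classical
  have : ECL.at X.G.edgeSet v = X.G.incidenceSet v := rfl
  rw [this, FGraph.deg, ← Nat.card_coe_set_eq]
  exact Nat.card_congr (X.G.incidenceSetEquivNeighborSet v).symm

theorem ECL.conn_le_deg (X : FGraph) [Finite X.V] (v w : X.V) (hvw : v ≠ w) :
    X.edgeConn ≤ X.deg v := by
  rw [ECL.deg_eq]
  refine ECL.le_cut X _ (fun g hg => hg.1) fun hc => ?_
  have := ECL.closed {v} (fun x y hxy hx => ?_) (hc.preconnected v w) rfl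
  · exact hvw this.symm
  · rw [SimpleGraph.deleteEdges_adj] at hxy
    have hx' : x = v := hx
    subst hx'
    exact absurd ⟨hxy.1, by simp⟩ hxy.2

/-- one mixed vertex -/
theorem ECL.cut_one (X : FGraph) [Finite X.V] (A B : Set (Sym2 X.V)) (hA : A ⊆ X.G.edgeSet)
    (hAB : ∀ g ∈ X.G.edgeSet, g ∈ A ∨ g ∈ B) (v : X.V)
    (hu : ∀ x, (∃ e ∈ A, x ∈ e) → (∃ f ∈ B, x ∈ f) → x = v) (e : Sym2 X.V) (he : e ∈ A) :
    X.edgeConn ≤ (ECL.at A v).ncard := by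
  refine ECL.le_cut X _ (fun g hg => hA hg.1) fun hc => ?_
  have hx : ∃ x ∈ e, x ≠ v := by
    have := hA he
    induction e with
    | _ a b =>
      by_cases h : a = v
      · refine ⟨b, by simp, fun hb => ?_⟩
        exact X.G.ne_of_adj this (h.trans hb.symm)
      · exact ⟨a, by simp, h⟩
  obtain ⟨x, hxe, hxv⟩ := hx
  have := ECL.closed {y | y ≠ v ∧ ∃ e ∈ A, y ∈ e} (fun y z hyz hy => ?_)
    (hc.preconnected x v) ⟨hxv, e, he, hxe⟩
  · exact this.1 rfl
  · rw [SimpleGraph.deleteEdges_adj] at hyz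
    obtain ⟨hyz, hn⟩ := hyz
    have hm : s(y, z) ∈ A := by
      rcases hAB s(y, z) hyz with h | h
      · exact h
      · exact absurd (hu y hy.2 ⟨_, h, by simp⟩) hy.1
    refine ⟨?_, _, hm, by simp⟩
    rintro rfl
    exact hn ⟨hm, by simp⟩

theorem ECL.main (X : FGraph) [Finite X.V] (hc : X.G.Connected)
    (h3 : ∀ v, 3 ≤ X.deg v) (F : Set (Sym2 X.line.V))
    (hn : Nonempty X.line.V)
    (hF : ¬ (X.line.G.deleteEdges F).Connected) : X.edgeConn < F.ncard := by
  classical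
  have : Finite X.line.V := inferInstanceAs (Finite X.G.edgeSet)
  have hpre : ¬ (X.line.G.deleteEdges F).Preconnected := fun h => hF ⟨h⟩
  unfold SimpleGraph.Preconnected at hpre
  push Not at hpre
  obtain ⟨e0, f0, hef⟩ := hpre
  let A : Set (Sym2 X.V) := {g | ∃ h : g ∈ X.G.edgeSet,
    (X.line.G.deleteEdges F).Reachable e0 ⟨g, h⟩}
  let B : Set (Sym2 X.V) := X.G.edgeSet \ A
  have hA : A ⊆ X.G.edgeSet := fun g hg => hg.1
  have hB : B ⊆ X.G.edgeSet := fun g hg => hg.1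
  have hAB : ∀ g ∈ X.G.edgeSet, g ∈ A ∨ g ∈ B := fun g hg => by
    by_cases h : g ∈ A
    · exact .inl h
    · exact .inr ⟨hg, h⟩
  have he0 : e0.1 ∈ A := ⟨e0.2, .refl _⟩
  have hf0 : f0.1 ∈ B := ⟨f0.2, fun h => hef h.2⟩
  let T : Set (Sym2 X.V × Sym2 X.V) := {p | p.1 ∈ A ∧ p.2 ∈ B ∧ ∃ v, v ∈ p.1 ∧ v ∈ p.2}
  have hT : T.ncard ≤ F.ncard := by
    let φ : X.line.V → Sym2 X.V := fun x => x.1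
    refine le_trans ?_ (Set.ncard_image_le (f := Sym2.map φ) (Set.toFinite F))
    refine Set.ncard_le_ncard_of_injOn (fun p => s(p.1, p.2)) ?_ ?_ (Set.toFinite _)
    · rintro ⟨e, f⟩ ⟨he, hf, v, hve, hvf⟩
      refine ⟨s(⟨e, he.1⟩, ⟨f, hf.1⟩), ?_, rfl⟩
      by_contra hnF
      apply hf.2
      refine ⟨hf.1, he.2.trans (SimpleGraph.Adj.reachable ?_)⟩
      refine SimpleGraph.deleteEdges_adj.2 ⟨?_, hnF⟩
      refine ⟨fun h => hf.2 ?_, ⟨v, hve, hvf⟩⟩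
      have : e = f := congrArg Subtype.val h
      exact this ▸ he
    · rintro ⟨e, f⟩ ⟨he, hf, _⟩ ⟨e', f'⟩ ⟨he', hf', _⟩ h
      rcases Sym2.eq_iff.1 h with ⟨h1, h2⟩ | ⟨h1, h2⟩
      · simp only at h1 h2
        rw [h1, h2]
      · simp only at h1 h2 he he' hf hf'
        exact absurd (h1 ▸ he) hf'.2
  have hsub : ∀ v, ECL.at A v ×ˢ ECL.at B v ⊆ T := by
    rintro v ⟨e, f⟩ ⟨he, hf⟩
    exact ⟨he.1, hf.1, v, he.2, hf.2⟩
  have hsum : ∀ v, (ECL.at A v).ncard + (ECL.at B v).ncard = X.deg v := by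
    intro v
    rw [ECL.deg_eq, ← Set.ncard_union_eq]
    · congr 1
      ext g
      constructor
      · rintro (h | h)
        · exact ⟨hA h.1, h.2⟩
        · exact ⟨hB h.1, h.2⟩
      · rintro ⟨h, hv⟩
        rcases hAB g h with h | h
        · exact .inl ⟨h, hv⟩
        · exact .inr ⟨h, hv⟩
    · rw [Set.disjoint_left]
      intro g h h'
      exact h'.1.2 h.1
  -- a mixed vertex
  have hmix : ∃ v, (∃ e ∈ A, v ∈ e) ∧ (∃ f ∈ B, v ∈ f) := by
    by_contra hno
    push Not at hno
    obtain ⟨a, ha⟩ : ∃ a, a ∈ e0.1 := ⟨_, Sym2.out_fst_mem _⟩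
    obtain ⟨b, hb⟩ : ∃ b, b ∈ f0.1 := ⟨_, Sym2.out_fst_mem _⟩
    have := ECL.closed {y | ∃ e ∈ A, y ∈ e} (fun y z hyz hy => ?_)
      (hc.preconnected a b) ⟨_, he0, ha⟩
    · exact hno b this _ hf0 hb
    · rcases hAB s(y, z) hyz with h | h
      · exact ⟨_, h, by simp⟩
      · exact absurd (by simp) (hno y hy _ h)
  have hpos : ∀ v, (∃ e ∈ A, v ∈ e) → (∃ f ∈ B, v ∈ f) →
      1 ≤ (ECL.at A v).ncard ∧ 1 ≤ (ECL.at B v).ncard := by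
    rintro v ⟨e, he, hve⟩ ⟨f, hf, hvf⟩
    exact ⟨(Set.ncard_pos (Set.toFinite _)).2 ⟨e, he, hve⟩,
      (Set.ncard_pos (Set.toFinite _)).2 ⟨f, hf, hvf⟩⟩
  obtain ⟨v, hvA, hvB⟩ := hmix
  obtain ⟨p1, p2⟩ := hpos v hvA hvB
  have s1 := hsum v
  have d1 := h3 v
  by_cases hu : ∀ x, (∃ e ∈ A, x ∈ e) → (∃ f ∈ B, x ∈ f) → x = v
  · have c1 := ECL.cut_one X A B hA hAB v hu _ he0
    have c2 := ECL.cut_one X B A hB (fun g hg => (hAB g hg).symm) v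
      (fun x h h' => hu x h' h) _ hf0
    have c3 := Set.ncard_le_ncard (hsub v) (Set.toFinite _)
    rw [Set.ncard_prod] at c3
    refine lt_of_lt_of_le ?_ (c3.trans hT)
    generalize (ECL.at A v).ncard = a at *
    generalize (ECL.at B v).ncard = b at *
    rcases Nat.lt_or_ge a 2 with h | h
    · have : a = 1 := by omega
      subst this
      omega
    · nlinarith
  · push Not at hu
    obtain ⟨w, hwA, hwB, hwv⟩ := hu
    obtain ⟨q1, q2⟩ := hpos w hwA hwB
    have s2 := hsum w
    have d2 := h3 w
    have l1 := ECL.conn_le_deg X v w hwv.symm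
    have l2 := ECL.conn_le_deg X w v hwv
    have hd : Disjoint (ECL.at A v ×ˢ ECL.at B v) (ECL.at A w ×ˢ ECL.at B w) := by
      rw [Set.disjoint_left]
      rintro ⟨e, f⟩ ⟨he, hf⟩ ⟨he', hf'⟩
      have h1 : e = s(v, w) := (Sym2.mem_and_mem_iff hwv.symm).1 ⟨he.2, he'.2⟩
      have h2 : f = s(v, w) := (Sym2.mem_and_mem_iff hwv.symm).1 ⟨hf.2, hf'.2⟩
      have h3 : e ∈ A := he.1
      have h4 : f ∉ A := hf.1.2
      exact h4 (h2 ▸ h1 ▸ h3)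
    have c3 := Set.ncard_le_ncard (Set.union_subset (hsub v) (hsub w)) (Set.toFinite _)
    rw [Set.ncard_union_eq hd, Set.ncard_prod, Set.ncard_prod] at c3
    refine lt_of_lt_of_le ?_ (c3.trans hT)
    generalize (ECL.at A v).ncard = a at *
    generalize (ECL.at B v).ncard = b at *
    generalize (ECL.at A w).ncard = a' at *
    generalize (ECL.at B w).ncard = b' at *
    have k1 : a + b ≤ a * b + 1 := by
      obtain ⟨a, rfl⟩ := Nat.exists_eq_add_of_le p1
      obtain ⟨b, rfl⟩ := Nat.exists_eq_add_of_le p2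
      nlinarith [Nat.zero_le (a * b)]
    have k2 : a' + b' ≤ a' * b' + 1 := by
      obtain ⟨a, rfl⟩ := Nat.exists_eq_add_of_le q1
      obtain ⟨b, rfl⟩ := Nat.exists_eq_add_of_le q2
      nlinarith [Nat.zero_le (a * b)]
    omega

/-- For a prolific graph with `δ(G) ≥ 3`, `λ(L(G)) > λ(G)`. -/
theorem edgeConn_line_gt (X : FGraph) [Finite X.V] (hp : X.Prolific)
    (h3 : 3 ≤ X.minDeg) : X.edgeConn < X.line.edgeConn := by
  have hc := hp.1
  have h3' : ∀ v, 3 ≤ X.deg v := fun v => h3.trans (Nat.sInf_le ⟨v, rfl⟩)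
  obtain ⟨v⟩ := hc.nonempty
  have hv := h3' v
  rw [ECL.deg_eq] at hv
  obtain ⟨e, he, f, hf, hef⟩ := (Set.one_lt_ncard (Set.toFinite _)).1
    (show 1 < (ECL.at X.G.edgeSet v).ncard by omega)
  have hne : {k | ∃ F : Set (Sym2 X.line.V), F ⊆ X.line.G.edgeSet ∧ F.ncard = k ∧
      ¬ (X.line.G.deleteEdges F).Connected}.Nonempty := by
    refine ⟨_, X.line.G.edgeSet, subset_rfl, rfl, fun h => ?_⟩
    have := ECL.closed (V := X.line.V) {(⟨e, he.1⟩ : X.line.V)} (fun x y hxy _ => ?_)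
      (h.preconnected ⟨e, he.1⟩ ⟨f, hf.1⟩) rfl
    · exact hef (congrArg Subtype.val this).symm
    · have hxy := SimpleGraph.deleteEdges_adj.1 hxy
      exact absurd hxy.1 hxy.2
  obtain ⟨F, _, hF, hF'⟩ := Nat.sInf_mem hne
  have := ECL.main X hc h3' F ⟨⟨e, he.1⟩⟩ hF'
  rw [hF] at this
  exact this
end

section
/- Let G be a prolific graph with minimum degree δ(G) ≥ 3. Then α(L^2(G)) > α(G), where α denotes the independence number. -/
open SimpleGraph

/-- The independence number `α(G)`: the maximum size of a set of pairwise
non-adjacent vertices. -/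
noncomputable def FGraph.indepNum (X : FGraph) : ℕ :=
  sSup {k | ∃ s : Set X.V, s.Pairwise (fun u v => ¬ X.G.Adj u v) ∧ s.ncard = k}

theorem exists_two_ne (X : FGraph) [Finite X.V] (h3 : 3 ≤ X.minDeg) (v w : X.V) :
    ∃ p : X.V × X.V, X.G.Adj v p.1 ∧ X.G.Adj v p.2 ∧ p.1 ≠ p.2 ∧ p.1 ≠ w ∧ p.2 ≠ w := by
  have hd : 3 ≤ (X.G.neighborSet v).ncard :=
    le_trans h3 (Nat.sInf_le ⟨v, rfl⟩)
  have h2 : 1 < ((X.G.neighborSet v) \ {w}).ncard := by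
    have := Set.pred_ncard_le_ncard_sdiff_singleton (X.G.neighborSet v) w
    omega
  obtain ⟨a, b, ha, hb, hab⟩ := (Set.one_lt_ncard_iff (Set.toFinite _)).1 h2
  exact ⟨(a, b), ha.1, hb.1, hab, ha.2, hb.2⟩

theorem line2_aux (X : FGraph) [Finite X.V] (h3 : 3 ≤ X.minDeg) (I : Set X.V)
    (hI : I.Pairwise (fun u v => ¬ X.G.Adj u v)) (w : X.V) (hw : w ∉ I) :
    ∃ s : Set X.line.line.V, s.Pairwise (fun u v => ¬ X.line.line.G.Adj u v) ∧
      s.ncard = I.ncard + 1 := by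
  choose p h1 h2 h12 hp1 hp2 using fun v => exists_two_ne X h3 v w
  let e1 : X.V → X.G.edgeSet := fun v => ⟨s(v, (p v).1), h1 v⟩
  let e2 : X.V → X.G.edgeSet := fun v => ⟨s(v, (p v).2), h2 v⟩
  have hadj : ∀ v, X.G.lineGraph.Adj (e1 v) (e2 v) := by
    intro v
    rw [SimpleGraph.lineGraph_adj_iff_exists]
    refine ⟨?_, v, by simp [e1], by simp [e2]⟩
    intro h
    have := congrArg Subtype.val h
    simp only [e1, e2] at this
    exact h12 v (Sym2.congr_right.1 this)
  let f : X.V → X.line.line.V := fun v => ⟨s(e1 v, e2 v), hadj v⟩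
  have key : ∀ u ∈ insert w I, ∀ v ∈ insert w I, u ≠ v → ∀ x y : X.V, X.G.Adj u x →
      x ≠ w → y ≠ w → s(u, x) ≠ s(v, y) := by
    intro u hu v hv huv x y hux hx hy h
    rcases Sym2.eq_iff.1 h with ⟨h, _⟩ | ⟨h, h'⟩
    · exact huv h
    · subst h h'
      have hu' : u ∈ I := hu.resolve_left hy
      have hv' : x ∈ I := hv.resolve_left hx
      exact hI hu' hv' huv hux
  have disj : ∀ u ∈ insert w I, ∀ v ∈ insert w I, u ≠ v → ∀ z : X.G.edgeSet,
      z ∈ (f u).1 → z ∈ (f v).1 → False := by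
    intro u hu v hv huv z hz hz'
    have a1 : z = e1 u ∨ z = e2 u := Sym2.mem_iff.1 hz
    have a2 : z = e1 v ∨ z = e2 v := Sym2.mem_iff.1 hz'
    rcases a1 with rfl | rfl <;> rcases a2 with h | h <;>
      have h' := congrArg Subtype.val h
    · exact key u hu v hv huv _ _ (h1 u) (hp1 u) (hp1 v) h'
    · exact key u hu v hv huv _ _ (h1 u) (hp1 u) (hp2 v) h'
    · exact key u hu v hv huv _ _ (h2 u) (hp2 u) (hp1 v) h'
    · exact key u hu v hv huv _ _ (h2 u) (hp2 u) (hp2 v) h'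
  have mem : ∀ u, e1 u ∈ (f u).1 := fun u => Sym2.mem_mk_left _ _
  refine ⟨f '' insert w I, ?_, ?_⟩
  · rintro _ ⟨u, hu, rfl⟩ _ ⟨v, hv, rfl⟩ huv hA
    have hA' : X.G.lineGraph.lineGraph.Adj (f u) (f v) := hA
    obtain ⟨-, z, hz, hz'⟩ := SimpleGraph.lineGraph_adj_iff_exists.1 hA'
    exact disj u hu v hv (fun h => huv (h ▸ rfl)) z hz hz'
  · rw [Set.InjOn.ncard_image, Set.ncard_insert_of_notMem hw (Set.toFinite _)]
    intro u hu v hv h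
    by_contra huv
    exact disj u hu v hv huv (e1 u) (mem u) (h ▸ mem u)

/-- For a prolific graph with `δ(G) ≥ 3`, `α(L²(G)) > α(G)`. -/
theorem indepNum_iter_two_gt (X : FGraph) [Finite X.V] (hp : X.Prolific)
    (h3 : 3 ≤ X.minDeg) : X.indepNum < (X.iter 2).indepNum := by
  have hfin : Finite X.line.line.V := by
    unfold FGraph.line
    infer_instance
  have bdd : ∀ Y : FGraph, Finite Y.V → BddAbove
      {k | ∃ s : Set Y.V, s.Pairwise (fun u v => ¬ Y.G.Adj u v) ∧ s.ncard = k} := by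
    intro Y hY
    refine ⟨Nat.card Y.V, ?_⟩
    rintro k ⟨s, -, rfl⟩
    exact Set.ncard_le_card s
  obtain ⟨I, hI, hk⟩ := Nat.sSup_mem (s := {k | ∃ s : Set X.V,
    s.Pairwise (fun u v => ¬ X.G.Adj u v) ∧ s.ncard = k})
    ⟨0, ∅, Set.pairwise_empty _, Set.ncard_empty _⟩ (bdd X inferInstance)
  obtain ⟨x⟩ := hp.1.nonempty
  obtain ⟨w, hw⟩ : ∃ w, w ∉ I := by
    by_cases hx : x ∈ I
    · obtain ⟨p, h, -⟩ := exists_two_ne X h3 x x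
      exact ⟨p.1, fun h' => hI hx h' h.ne h⟩
    · exact ⟨x, hx⟩
  have h := le_csSup (bdd X.line.line hfin) (line2_aux X h3 I hI w hw)
  have e : X.indepNum = I.ncard := hk.symm
  have e' : I.ncard + 1 ≤ (X.iter 2).indepNum := h
  omega
end

section
/- Let G be a prolific graph with minimum degree δ(G) ≥ 4. Then γ(L^2(G)) > γ(G), where γ denotes the domination number. -/
open SimpleGraph

/-- The domination number `γ(G)`: the minimum size of a set `S` of vertices such that
every vertex is in `S` or adjacent to a vertex of `S`. -/
noncomputable def FGraph.domNum (X : FGraph) : ℕ :=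
  sInf {k | ∃ S : Set X.V, (∀ v : X.V, v ∈ S ∨ ∃ u ∈ S, X.G.Adj u v) ∧ S.ncard = k}

lemma aux_count {V : Type} [Finite V] (G : SimpleGraph V)
    (hd : ∀ v, 4 ≤ Nat.card (G.neighborSet v)) (S : Set G.lineGraph.edgeSet)
    (hS : ∀ v, v ∈ S ∨ ∃ u ∈ S, G.lineGraph.lineGraph.Adj u v) :
    3 * Nat.card V ≤ 4 * S.ncard := by
  classical
  haveI := Fintype.ofFinite V
  haveI : Fintype G.edgeSet := Fintype.ofFinite _
  haveI : Fintype G.lineGraph.edgeSet := Fintype.ofFinite _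
  set T : Finset G.lineGraph.edgeSet := S.toFinset with hT
  have hcov : ∀ e f : G.edgeSet, e ≠ f → ∀ v, v ∈ e.1 → v ∈ f.1 →
      ∃ s ∈ T, e ∈ s.1 ∨ f ∈ s.1 := by
    intro e f hne v he hf
    have hadj : G.lineGraph.Adj e f := by
      rw [SimpleGraph.lineGraph_adj_iff_exists]
      exact ⟨hne, v, he, hf⟩
    rcases hS ⟨s(e, f), hadj⟩ with h | ⟨u, hu, h⟩
    · exact ⟨_, by simpa [hT] using h, Or.inl (by simp)⟩
    · rw [SimpleGraph.lineGraph_adj_iff_exists] at h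
      obtain ⟨_, x, hx, hx'⟩ := h
      refine ⟨u, by simpa [hT] using hu, ?_⟩
      simp only [Sym2.mem_iff] at hx'
      rcases hx' with rfl | rfl
      · exact Or.inl hx
      · exact Or.inr hx
  have hv : ∀ v : V, 3 ≤ ∑ s ∈ T, (s.1.toFinset.filter (fun e => v ∈ e.1)).card := by
    intro v
    set I : Finset G.edgeSet := Finset.univ.filter (fun e => v ∈ e.1) with hI
    have hIc : 4 ≤ I.card := by
      refine (hd v).trans ?_
      rw [Nat.card_eq_fintype_card, ← Finset.card_univ]
      refine Finset.card_le_card_of_injOn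
        (fun w => (⟨s(v, w.1), w.2⟩ : G.edgeSet)) ?_ ?_
      · intro w _
        simp [hI]
      · intro a _ b _ hab
        have h := congrArg Subtype.val hab
        exact Subtype.ext (Sym2.congr_right.mp h)
    set C := T.biUnion (fun s => s.1.toFinset.filter (fun e => v ∈ e.1)) with hC
    have h1 : (I \ C).card ≤ 1 := by
      rw [Finset.card_le_one]
      intro e he f hf
      by_contra hne
      simp only [hI, hC, Finset.mem_sdiff, Finset.mem_filter, Finset.mem_univ, true_and,
        Finset.mem_biUnion, Sym2.mem_toFinset, not_exists, not_and] at he hf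
      obtain ⟨s, hs, h | h⟩ := hcov e f hne v he.1 hf.1
      · exact he.2 s hs h he.1
      · exact hf.2 s hs h hf.1
    have h2 : I.card ≤ (I \ C).card + C.card := by
      have := Finset.le_card_sdiff C I
      omega
    have h3 : C.card ≤ ∑ s ∈ T, (s.1.toFinset.filter (fun e => v ∈ e.1)).card :=
      Finset.card_biUnion_le
    omega
  have hc2 : ∀ {α : Type} [DecidableEq α] (z : Sym2 α), z.toFinset.card ≤ 2 := by
    intro α _ z
    induction z with
    | _ a b =>
      rw [Sym2.toFinset_mk_eq]
      exact Finset.card_le_two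
  have hs : ∀ s ∈ T, ∑ v : V, (s.1.toFinset.filter (fun e => v ∈ e.1)).card ≤ 4 := by
    intro s _
    simp only [Finset.card_filter]
    rw [Finset.sum_comm]
    calc _ ≤ ∑ e ∈ s.1.toFinset, 2 := by
            refine Finset.sum_le_sum fun e _ => ?_
            rw [← Finset.card_filter]
            refine le_trans (Finset.card_le_card ?_) (hc2 e.1)
            intro x hx
            simpa using hx
      _ ≤ 4 := by
            have := hc2 s.1
            simp only [Finset.sum_const, smul_eq_mul]
            omega
  have hN : S.ncard = T.card := by rw [hT, Set.ncard_eq_toFinset_card']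
  rw [hN, Nat.card_eq_fintype_card]
  calc 3 * Fintype.card V = ∑ v : V, 3 := by simp [mul_comm]
    _ ≤ ∑ v : V, ∑ s ∈ T, (s.1.toFinset.filter (fun e => v ∈ e.1)).card :=
        Finset.sum_le_sum fun v _ => hv v
    _ = ∑ s ∈ T, ∑ v : V, (s.1.toFinset.filter (fun e => v ∈ e.1)).card := Finset.sum_comm
    _ ≤ ∑ s ∈ T, 4 := Finset.sum_le_sum hs
    _ = 4 * T.card := by simp [mul_comm]

lemma domNum_attained (X : FGraph) :
    ∃ S : Set X.V, (∀ v : X.V, v ∈ S ∨ ∃ u ∈ S, X.G.Adj u v) ∧ S.ncard = X.domNum :=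
  Nat.sInf_mem (s := {k | ∃ S : Set X.V, (∀ v : X.V, v ∈ S ∨ ∃ u ∈ S, X.G.Adj u v) ∧ S.ncard = k})
    ⟨_, Set.univ, fun v => Or.inl (Set.mem_univ v), rfl⟩

lemma domNum_le_ncard (X : FGraph) (S : Set X.V)
    (h : ∀ v : X.V, v ∈ S ∨ ∃ u ∈ S, X.G.Adj u v) : X.domNum ≤ S.ncard :=
  Nat.sInf_le ⟨S, h, rfl⟩

lemma two_mul_domNum_le (X : FGraph) [Finite X.V] (hd : ∀ v, ∃ u, X.G.Adj v u) :
    2 * X.domNum ≤ Nat.card X.V := by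
  obtain ⟨S, hS, hc⟩ := domNum_attained X
  have h2 : X.domNum ≤ Sᶜ.ncard := by
    apply domNum_le_ncard
    intro v
    by_contra hcon
    simp only [Set.mem_compl_iff, not_or, not_not, not_exists, not_and] at hcon
    obtain ⟨hv, hn⟩ := hcon
    have h3 : X.domNum ≤ (S \ {v}).ncard := by
      apply domNum_le_ncard
      intro x
      by_cases hx : x = v
      · subst hx
        obtain ⟨u, hu⟩ := hd x
        refine Or.inr ⟨u, ⟨?_, hu.ne'⟩, hu.symm⟩
        by_contra h
        exact hn u h hu.symm
      · rcases hS x with h | ⟨y, hy, hyx⟩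
        · exact Or.inl ⟨h, hx⟩
        · by_cases hyv : y = v
          · subst hyv
            refine Or.inl ⟨?_, hx⟩
            by_contra h
            exact hn x h hyx.symm
          · exact Or.inr ⟨y, ⟨hy, hyv⟩, hyx⟩
    have := Set.ncard_diff_singleton_lt_of_mem hv (Set.toFinite S)
    omega
  have := Set.ncard_add_ncard_compl S
  omega

/-- For a prolific graph with `δ(G) ≥ 4`, `γ(L²(G)) > γ(G)`. -/
theorem domNum_iter_two_gt (X : FGraph) [Finite X.V] (hp : X.Prolific)
    (h4 : 4 ≤ X.minDeg) : X.domNum < (X.iter 2).domNum := by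
  have hd : ∀ v, 4 ≤ Nat.card (X.G.neighborSet v) := fun v =>
    h4.trans (Nat.sInf_le ⟨v, rfl⟩)
  have h1 := two_mul_domNum_le X (fun v => by
    by_contra hcon
    have : IsEmpty (X.G.neighborSet v) := ⟨fun u => hcon ⟨u.1, u.2⟩⟩
    have h := hd v
    rw [Nat.card_of_isEmpty] at h
    omega)
  obtain ⟨S, hS, hc⟩ := domNum_attained (X.iter 2)
  have h2 : 3 * Nat.card X.V ≤ 4 * S.ncard := aux_count X.G hd S hS
  haveI := hp.1.nonempty
  have h3 : 0 < Nat.card X.V := Nat.card_pos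
  omega
end

section
/- Let G be a finite connected graph with m edges. Then the independence number of its second iterated line graph equals the matching number of its line graph, and both equal ⌊m/2⌋: α(L^2(G)) = μ(L(G)) = ⌊m/2⌋. -/
open SimpleGraph

/-- The matching number `μ(G)`: the maximum number of pairwise disjoint edges. -/
noncomputable def FGraph.matchNum (X : FGraph) : ℕ :=
  sSup {k | ∃ s : Set (Sym2 X.V), s ⊆ X.G.edgeSet ∧
    s.Pairwise (fun e f => ∀ v : X.V, ¬(v ∈ e ∧ v ∈ f)) ∧ s.ncard = k}

open Classical in
/-- parity of the fibre of `f` over `v` within `S` -/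
noncomputable def fibPar {E V : Type} (f : E → V) (S : Finset E) (v : V) : ZMod 2 :=
  ∑ e ∈ S, if f e = v then 1 else 0

open Classical in
lemma fibPar_insert {E V : Type} [DecidableEq E] (f : E → V) (S : Finset E) (e : E) (he : e ∉ S) (v : V) :
    fibPar f (insert e S) v = (if f e = v then 1 else 0) + fibPar f S v := by
  unfold fibPar
  rw [Finset.sum_insert he]

lemma zmod2_aa (a : ZMod 2) : a + a = 0 := CharTwo.add_self_eq_zero a

open Classical in
lemma fibPar_update {E V : Type} [Fintype E] [DecidableEq E] (f : E → V) (e : E) (w v : V) :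
    fibPar (Function.update f e w) Finset.univ v =
      fibPar f Finset.univ v + (if f e = v then 1 else 0) + (if w = v then 1 else 0) := by
  have h1 : (Finset.univ : Finset E) = insert e (Finset.univ.erase e) := by simp
  rw [h1, fibPar_insert _ _ _ (by simp), fibPar_insert _ _ _ (by simp)]
  have h2 : fibPar (Function.update f e w) (Finset.univ.erase e) v
      = fibPar f (Finset.univ.erase e) v := by
    unfold fibPar
    apply Finset.sum_congr rfl
    intro x hx
    rw [Function.update_of_ne (Finset.ne_of_mem_erase hx)]
  rw [h2, Function.update_self]
  have := zmod2_aa (if f e = v then 1 else 0)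
  linear_combination -this

open Classical in
lemma walk_flip {V : Type} (G : SimpleGraph V) [Fintype G.edgeSet] {u w : V} (p : G.Walk u w) :
    ∀ f : G.edgeSet → V, (∀ e : G.edgeSet, f e ∈ (e : Sym2 V)) →
    ∃ f' : G.edgeSet → V, (∀ e : G.edgeSet, f' e ∈ (e : Sym2 V)) ∧
      ∀ v, fibPar f' Finset.univ v = fibPar f Finset.univ v
        + (if u = v then 1 else 0) + (if w = v then 1 else 0) := by
  induction p with
  | nil =>
    intro f hf
    refine ⟨f, hf, fun v => ?_⟩
    rw [add_assoc, zmod2_aa, add_zero]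
  | @cons u x w h p ih =>
    intro f hf
    let e0 : G.edgeSet := ⟨s(u, x), h⟩
    have key : ∃ y, y ∈ (e0 : Sym2 V) ∧ ∀ v, ((if f e0 = v then 1 else 0) + (if y = v then 1 else 0) : ZMod 2)
        = (if u = v then 1 else 0) + (if x = v then 1 else 0) := by
      have := hf e0
      rcases Sym2.mem_iff.1 this with h | h
      · exact ⟨x, by simp [e0], fun v => by rw [h]⟩
      · exact ⟨u, by simp [e0], fun v => by rw [h, add_comm]⟩
    obtain ⟨y, hy, hk⟩ := key
    obtain ⟨f', hf', h'⟩ := ih (Function.update f e0 y) (by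
      intro e
      by_cases he : e = e0
      · subst he; simpa using hy
      · rw [Function.update_of_ne he]; exact hf e)
    refine ⟨f', hf', fun v => ?_⟩
    rw [h' v, fibPar_update]
    have := zmod2_aa (if x = v then 1 else 0)
    linear_combination hk v + this

open Classical in
lemma exists_good {V : Type} (G : SimpleGraph V) [Fintype V] [Fintype G.edgeSet]
    (hc : G.Preconnected) (r : V) :
    ∃ f : G.edgeSet → V, (∀ e : G.edgeSet, f e ∈ (e : Sym2 V)) ∧
      ∀ v, v ≠ r → fibPar f Finset.univ v = 0 := by
  suffices H : ∀ S : Finset V, ∃ f : G.edgeSet → V, (∀ e : G.edgeSet, f e ∈ (e : Sym2 V)) ∧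
      ∀ v ∈ S, v ≠ r → fibPar f Finset.univ v = 0 by
    obtain ⟨f, hf, h⟩ := H Finset.univ
    exact ⟨f, hf, fun v => h v (Finset.mem_univ v)⟩
  intro S
  induction S using Finset.induction_on with
  | empty => exact ⟨fun e => (e : Sym2 V).out.1, fun e => Sym2.out_fst_mem _, by simp⟩
  | insert a S ha ih =>
    obtain ⟨f, hf, h⟩ := ih
    by_cases h0 : fibPar f Finset.univ a = 0
    · refine ⟨f, hf, fun v hv hr => ?_⟩
      rcases Finset.mem_insert.1 hv with rfl | hv
      · exact h0
      · exact h v hv hr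
    · obtain ⟨p⟩ := hc a r
      obtain ⟨f', hf', h'⟩ := walk_flip G p f hf
      refine ⟨f', hf', fun v hv hr => ?_⟩
      rw [h' v, if_neg (Ne.symm hr)]
      rcases Finset.mem_insert.1 hv with rfl | hv
      · rw [if_pos rfl]
        revert h0
        generalize fibPar f Finset.univ v = z
        revert z
        decide
      · rw [if_neg (fun e : a = v => ha (e ▸ hv)), h v hv hr]; simp

open Classical in
lemma exists_pairs {E V : Type} [Fintype V] (L : SimpleGraph E) (f : E → V)
    (hL : ∀ a b, a ≠ b → f a = f b → L.Adj a b) :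
    ∀ n (S : Finset E), S.card = n → ∃ M : Finset (Sym2 E), (∀ e ∈ M, e ∈ L.edgeSet) ∧
      (∀ e ∈ M, ∀ v ∈ e, v ∈ S) ∧
      (M : Set (Sym2 E)).Pairwise (fun e f => ∀ v : E, ¬(v ∈ e ∧ v ∈ f)) ∧
      S.card ≤ 2 * M.card + (Finset.univ.filter (fun v => fibPar f S v ≠ 0)).card := by
  intro n
  induction n using Nat.strong_induction_on with
  | _ n ih =>
  intro S hS
  by_cases hinj : ∀ a ∈ S, ∀ b ∈ S, f a = f b → a = b
  · refine ⟨∅, by simp, by simp, by simp, ?_⟩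
    rw [← Finset.card_image_of_injOn (s := S) (f := f) (fun a ha b hb => hinj a ha b hb)]
    simp only [Finset.card_empty, mul_zero, zero_add]
    apply Finset.card_le_card
    intro v hv
    obtain ⟨a, ha, rfl⟩ := Finset.mem_image.1 hv
    rw [Finset.mem_filter]
    refine ⟨Finset.mem_univ _, ?_⟩
    unfold fibPar
    rw [Finset.sum_eq_single_of_mem a ha]
    · simp
    · intro b hb hba
      rw [if_neg (fun h => hba (hinj b hb a ha h))]
  · push Not at hinj
    obtain ⟨a, ha, b, hb, hab, hne⟩ := hinj
    set T := (S.erase a).erase b with hT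
    have hbT : b ∉ T := by simp [hT]
    have haT : a ∉ insert b T := by simp [hT, hne]
    have hST : S = insert a (insert b T) := by
      rw [hT, Finset.insert_erase (by simp [hb, hne.symm]), Finset.insert_erase ha]
    have hcard : S.card = T.card + 2 := by
      rw [hST, Finset.card_insert_of_notMem haT, Finset.card_insert_of_notMem hbT]
    obtain ⟨M, h1, h2, h3, h4⟩ := ih T.card (by omega) T rfl
    have hfp : ∀ v, fibPar f S v = fibPar f T v := by
      intro v
      rw [hST, fibPar_insert _ _ _ haT, fibPar_insert _ _ _ hbT, hab, ← add_assoc, zmod2_aa,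
        zero_add]
    have haT' : a ∉ T := fun h => haT (Finset.mem_insert_of_mem h)
    have hnew : s(a, b) ∉ M := fun h => haT' (h2 _ h a (by simp))
    refine ⟨insert s(a, b) M, ?_, ?_, ?_, ?_⟩
    · intro e he
      rcases Finset.mem_insert.1 he with rfl | he
      · exact hL a b hne hab
      · exact h1 e he
    · intro e he v hv
      rcases Finset.mem_insert.1 he with rfl | he
      · rcases Sym2.mem_iff.1 hv with rfl | rfl
        · exact ha
        · exact hb
      · rw [hST]; simp [h2 e he v hv]
    · rw [Finset.coe_insert]
      have hd : ∀ e ∈ M, ∀ v, v ∈ s(a, b) → v ∈ e → False := by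
        intro e he v hv hve
        have := h2 e he v hve
        rcases Sym2.mem_iff.1 hv with rfl | rfl
        · exact haT' this
        · exact hbT this
      refine Set.Pairwise.insert h3 ?_
      intro e he _
      exact ⟨fun v hv => hd e he v hv.1 hv.2, fun v hv => hd e he v hv.2 hv.1⟩
    · rw [Finset.card_insert_of_notMem hnew]
      simp only [hfp]
      omega

open Classical in
lemma matching_le {E : Type} [Fintype E] (L : SimpleGraph E) (s : Set (Sym2 E))
    (hs : s ⊆ L.edgeSet) (hp : s.Pairwise (fun e f => ∀ v : E, ¬(v ∈ e ∧ v ∈ f))) :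
    s.ncard ≤ Fintype.card E / 2 := by
  have : s.toFinset.card * 2 ≤ Fintype.card E := by
    rw [← Finset.sum_const_nat (s := s.toFinset) (f := fun e => e.toFinset.card),
      ← Finset.card_biUnion]
    · exact Finset.card_le_univ _
    · intro e he f hf hne
      rw [Function.onFun, Finset.disjoint_left]
      intro v hv hv'
      exact hp (by simpa using he) (by simpa using hf) hne v
        ⟨Sym2.mem_toFinset.1 hv, Sym2.mem_toFinset.1 hv'⟩
    · intro e he
      exact Sym2.card_toFinset_of_not_isDiag _ (L.not_isDiag_of_mem_edgeSet (hs (by simpa using he)))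
  rw [Set.ncard_eq_toFinset_card']
  omega

lemma indepNum_line (Y : FGraph) : Y.line.indepNum = Y.matchNum := by
  unfold FGraph.indepNum FGraph.matchNum
  congr 1
  ext k
  constructor
  · rintro ⟨s, hs, hk⟩
    change Set Y.G.edgeSet at s
    refine ⟨Subtype.val '' s, ?_, ?_, ?_⟩
    · rintro _ ⟨e, _, rfl⟩; exact e.2
    · rintro _ ⟨e, he, rfl⟩ _ ⟨f, hf, rfl⟩ hne v hv
      have hne' : e ≠ f := fun h => hne (by rw [h])
      exact hs he hf hne' (lineGraph_adj_iff_exists.2 ⟨hne', v, hv⟩)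
    · rw [Set.ncard_image_of_injective _ Subtype.val_injective]; exact hk
  · rintro ⟨s, hs, hp, hk⟩
    refine ⟨(Subtype.val ⁻¹' s : Set Y.G.edgeSet), ?_, ?_⟩
    · intro e he f hf hne hadj
      obtain ⟨_, v, hv⟩ := lineGraph_adj_iff_exists.1 hadj
      exact hp he hf (fun h => hne (Subtype.ext h)) v hv
    · rw [← hk]
      have := Set.ncard_image_of_injective (Subtype.val ⁻¹' s : Set Y.G.edgeSet)
        Subtype.val_injective
      rw [Subtype.image_preimage_coe, Set.inter_eq_right.2 hs] at this
      exact this.symm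

/-- For a finite connected graph with `m` edges,
`α(L²(G)) = μ(L(G)) = ⌊m/2⌋`. -/
theorem indepNum_iter_two_eq (X : FGraph) [Finite X.V] (hc : X.G.Connected) :
    (X.iter 2).indepNum = (X.iter 1).matchNum ∧ (X.iter 1).matchNum = X.e / 2 := by
  classical
  refine ⟨indepNum_line (X.iter 1), ?_⟩
  haveI := Fintype.ofFinite X.V
  haveI := Fintype.ofFinite X.G.edgeSet
  change X.line.matchNum = _
  have hub : ∀ k ∈ {k | ∃ s : Set (Sym2 X.line.V), s ⊆ X.line.G.edgeSet ∧
    s.Pairwise (fun e f => ∀ v : X.line.V, ¬(v ∈ e ∧ v ∈ f)) ∧ s.ncard = k}, k ≤ X.e / 2 := by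
    rintro k ⟨s, hs, hp, rfl⟩
    have := matching_le (E := X.G.edgeSet) X.G.lineGraph s hs hp
    unfold FGraph.e
    rw [Nat.card_eq_fintype_card]
    exact this
  obtain ⟨r⟩ := hc.nonempty
  obtain ⟨f, hf, h0⟩ := exists_good X.G hc.preconnected r
  obtain ⟨M, h1, _, h3, h4⟩ := exists_pairs X.G.lineGraph f
    (fun a b hne hab => lineGraph_adj_iff_exists.2 ⟨hne, f a, hf a, hab ▸ hf b⟩) _ Finset.univ rfl
  have hodd : (Finset.univ.filter (fun v => fibPar f Finset.univ v ≠ 0)).card ≤ 1 := by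
    rw [← Finset.card_singleton r]
    apply Finset.card_le_card
    intro v hv
    rw [Finset.mem_filter] at hv
    rw [Finset.mem_singleton]
    by_contra h
    exact hv.2 (h0 v h)
  have hM : X.e / 2 ≤ M.card := by
    unfold FGraph.e
    rw [Nat.card_eq_fintype_card, ← Finset.card_univ]
    omega
  apply le_antisymm
  · exact csSup_le' hub
  · refine hM.trans (le_csSup ⟨_, hub⟩ ⟨(M : Set (Sym2 X.G.edgeSet)), h1, h3, ?_⟩)
    exact Set.ncard_coe_finset M
end
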